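/- Let Λ be a group with a subgroup Δ ≤ Λ, let A and B be unital C*-algebras, let α : Λ → Aut(A) and β : Λ → Aut(B) be actions, let ψ : A → B be a ⋆-isomorphism, and let w : Λ → U(B) be a weak 1-cocycle for β such that w_γ · β_γ(b) · w_γ* = ψ(α_γ(ψ⁻¹(b))) for every γ ∈ Λ and every b ∈ B. If u, u' : Λ → U(A) are weak 1-cocycles for α that are Δ-locally weakly cohomologous, then the maps γ ↦ ψ(u_γ)·w_γ and γ ↦ ψ(u'_γ)·w_γ are weak 1-cocycles for β that are Δ-locally weakly cohomologous. -/

import Mathlib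

/-- `u : Λ → A` is a weak 1-cocycle for the action `α` (a map into unitaries satisfying the
cocycle identity up to scalars). -/
def IsWeakOneCocycle {Λ A : Type*} [Group Λ]
    [NormedRing A] [StarRing A] [CStarRing A] [NormedAlgebra ℂ A] [StarModule ℂ A]
    [CompleteSpace A]
    (α : Λ → (A ≃⋆ₐ[ℂ] A)) (u : Λ → A) : Prop :=
  (∀ γ, u γ ∈ unitary A) ∧
    ∀ γ ρ : Λ, ∃ c : ℂ, u γ * α γ (u ρ) = c • u (γ * ρ)

/-- Two weak 1-cocycles `u, u'` for `α` are `Δ`-locally weakly cohomologous: there is a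
unitary `v` such that `u'_γ = c ⬝ v* u_γ α_γ(v)` up to scalars, for every `γ ∈ Δ`. -/
def LocallyWeaklyCohomologous {Λ A : Type*} [Group Λ]
    [NormedRing A] [StarRing A] [CStarRing A] [NormedAlgebra ℂ A] [StarModule ℂ A]
    [CompleteSpace A]
    (Δ : Subgroup Λ) (α : Λ → (A ≃⋆ₐ[ℂ] A)) (u u' : Λ → A) : Prop :=
  ∃ v ∈ unitary A, ∀ γ ∈ Δ, ∃ c : ℂ, u' γ = c • (star v * u γ * α γ v)

/-- If `ψ : A → B` is a ⋆-isomorphism and `w` is a weak 1-cocycle for `β` with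
`w_γ β_γ(b) w_γ* = ψ(α_γ(ψ⁻¹(b)))`, and if `u, u'` are `Δ`-locally weakly cohomologous weak
1-cocycles for `α`, then `γ ↦ ψ(u_γ) w_γ` and `γ ↦ ψ(u'_γ) w_γ` are weak 1-cocycles for `β`
that are `Δ`-locally weakly cohomologous. -/
theorem locallyWeaklyCohomologous_transport {Λ A B : Type*} [Group Λ]
    [NormedRing A] [StarRing A] [CStarRing A] [NormedAlgebra ℂ A] [StarModule ℂ A]
    [CompleteSpace A]
    [NormedRing B] [StarRing B] [CStarRing B] [NormedAlgebra ℂ B] [StarModule ℂ B]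
    [CompleteSpace B]
    (Δ : Subgroup Λ)
    (α : Λ → (A ≃⋆ₐ[ℂ] A)) (hα : ∀ γ ρ : Λ, ∀ a : A, α (γ * ρ) a = α γ (α ρ a))
    (β : Λ → (B ≃⋆ₐ[ℂ] B)) (hβ : ∀ γ ρ : Λ, ∀ b : B, β (γ * ρ) b = β γ (β ρ b))
    (ψ : A ≃⋆ₐ[ℂ] B)
    (w : Λ → B) (hw : IsWeakOneCocycle β w)
    (hcov : ∀ γ : Λ, ∀ b : B, w γ * β γ b * star (w γ) = ψ (α γ (ψ.symm b)))
    (u u' : Λ → A) (hu : IsWeakOneCocycle α u) (hu' : IsWeakOneCocycle α u')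
    (huu' : LocallyWeaklyCohomologous Δ α u u') :
    IsWeakOneCocycle β (fun γ => ψ (u γ) * w γ) ∧
      IsWeakOneCocycle β (fun γ => ψ (u' γ) * w γ) ∧
      LocallyWeaklyCohomologous Δ β (fun γ => ψ (u γ) * w γ) (fun γ => ψ (u' γ) * w γ) := by
  have key : ∀ γ a, w γ * β γ (ψ a) = ψ (α γ a) * w γ := by
    intro γ a
    have h := hcov γ (ψ a)
    rw [StarAlgEquiv.symm_apply_apply] at h
    rw [← h, mul_assoc _ (star (w γ)), Unitary.star_mul_self_of_mem (hw.1 γ), mul_one]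
  have unit : ∀ a ∈ unitary A, ψ a ∈ unitary B := by
    intro a ha
    rw [Unitary.mem_iff] at ha ⊢
    rw [← map_star, ← map_mul, ← map_mul, ha.1, ha.2, map_one]
    exact ⟨rfl, rfl⟩
  have coc : ∀ x : Λ → A, IsWeakOneCocycle α x →
      IsWeakOneCocycle β (fun γ => ψ (x γ) * w γ) := by
    intro x hx
    refine ⟨fun γ => mul_mem (unit _ (hx.1 γ)) (hw.1 γ), fun γ ρ => ?_⟩
    obtain ⟨c, hc⟩ := hx.2 γ ρ
    obtain ⟨d, hd⟩ := hw.2 γ ρ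
    refine ⟨c * d, ?_⟩
    calc ψ (x γ) * w γ * β γ (ψ (x ρ) * w ρ)
        = ψ (x γ) * (w γ * β γ (ψ (x ρ))) * β γ (w ρ) := by
          rw [map_mul]; simp only [mul_assoc]
      _ = ψ (x γ * α γ (x ρ)) * (w γ * β γ (w ρ)) := by
          rw [key, map_mul]; simp only [mul_assoc]
      _ = (c * d) • (ψ (x (γ * ρ)) * w (γ * ρ)) := by
          rw [hc, hd, map_smul, smul_mul_smul_comm]
  refine ⟨coc u hu, coc u' hu', ?_⟩
  obtain ⟨v, hv, h⟩ := huu'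
  refine ⟨ψ v, unit v hv, fun γ hγ => ?_⟩
  obtain ⟨c, hc⟩ := h γ hγ
  refine ⟨c, ?_⟩
  have k := key γ v
  simp only [hc, map_smul, map_mul, map_star, smul_mul_assoc, mul_assoc, k]
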